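/- Let H ∈ ℝ^{p×N}, α₁,…,α_N > 0 with ᾱ = ∑_{i=1}^N α_i and α_min = min_i α_i, and let V = [v₁,…,v_N] satisfy ‖v_i‖₂² = α_i for all i. Let U = [u₁,…,u_N] satisfy u_iᵀv_i = 0 for all i. Let g_i be the i-th column of ∇ℓ(V) = −2(H+V)M(V)^{-1}, let Λ be the N×N diagonal matrix with Λ_{ii} = −(1/α_i)·g_iᵀv_i, and let Proj(W) denote the matrix whose i-th column is (I_p − v_iv_iᵀ/α_i)·w_i for W with columns w_i. Then ‖Proj(∇²ℓ(V)[U]) + U·Λ‖_F ≤ L·‖U‖_F, where L = 2 + 4(‖H‖_F + √ᾱ)² + (2/√α_min)·(‖H‖_F + √ᾱ). -/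

import Mathlib

/-!
Write `A = H + V` and `P = M(V)⁻¹`, where `M(V) = I + AᵀA`. The bound rests on one fact: right
multiplication by `P` does not increase the Frobenius norm, because for `Y = XP` one has
`X = Y + YAᵀA` and `⟨Y, YAᵀA⟩ = ‖YAᵀ‖² ≥ 0`, so `‖X‖ ≥ ‖Y‖`. Submultiplicativity then gives
`‖∇²ℓ(V)[U]‖ ≤ (2 + 4‖A‖²)‖U‖` and `‖∇ℓ(V)‖ ≤ 2‖A‖`, while
`‖A‖ ≤ ‖H‖ + ‖V‖ = ‖H‖ + √ᾱ`. The column-wise tangent projection is a contraction, and by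
Cauchy–Schwarz each multiplier satisfies `|g_iᵀv_i| / α_i ≤ ‖g_i‖ / √α_i ≤ 2‖A‖ / √α_min`.
-/


open Matrix

/-- The Frobenius norm of a real matrix. -/
noncomputable def frob {p N : ℕ} (A : Matrix (Fin p) (Fin N) ℝ) : ℝ :=
  Real.sqrt (∑ x, ∑ i, (A x i) ^ 2)

/-- `M(V) = I_N + (H+V)ᵀ(H+V)`. -/
noncomputable def Mmat {p N : ℕ} (H V : Matrix (Fin p) (Fin N) ℝ) :
    Matrix (Fin N) (Fin N) ℝ :=
  1 + (H + V)ᵀ * (H + V)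

/-- The Euclidean gradient `∇ℓ(V) = −2(H+V)M(V)⁻¹` of `ℓ`. -/
noncomputable def egrad {p N : ℕ} (H V : Matrix (Fin p) (Fin N) ℝ) :
    Matrix (Fin p) (Fin N) ℝ :=
  (-2 : ℝ) • ((H + V) * (Mmat H V)⁻¹)

/-- The Euclidean Hessian of `ℓ` at `V` applied to `U`. -/
noncomputable def hess {p N : ℕ} (H V U : Matrix (Fin p) (Fin N) ℝ) :
    Matrix (Fin p) (Fin N) ℝ :=
  (-2 : ℝ) • (U * (Mmat H V)⁻¹)
    + (2 : ℝ) • ((H + V) * (Mmat H V)⁻¹ * (Uᵀ * (H + V) + (H + V)ᵀ * U) * (Mmat H V)⁻¹)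

/-- The Riemannian Hessian `Proj(∇²ℓ(V)[U]) + U·Λ` of `ℓ` on the product of spheres:
its `i`-th column is `(I_p − v_iv_iᵀ/α_i)(∇²ℓ(V)[U])_i − (1/α_i)(g_iᵀv_i)·u_i`. -/
noncomputable def rhess {p N : ℕ} (α : Fin N → ℝ) (H V U : Matrix (Fin p) (Fin N) ℝ) :
    Matrix (Fin p) (Fin N) ℝ :=
  Matrix.of fun x i =>
    (hess H V U x i - (α i)⁻¹ * (∑ y, V y i * hess H V U y i) * V x i)
      - (α i)⁻¹ * (∑ y, egrad H V y i * V y i) * U x i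

open scoped Matrix.Norms.Frobenius

lemma frob_eq_norm {p N : ℕ} (A : Matrix (Fin p) (Fin N) ℝ) : frob A = ‖A‖ := by
  rw [frob, Matrix.frobenius_norm_def, Real.sqrt_eq_rpow]
  simp

lemma frob_nonneg {p N : ℕ} (A : Matrix (Fin p) (Fin N) ℝ) : 0 ≤ frob A :=
  Real.sqrt_nonneg _

lemma frob_sq {p N : ℕ} (A : Matrix (Fin p) (Fin N) ℝ) :
    frob A ^ 2 = ∑ x, ∑ i, (A x i) ^ 2 :=
  Real.sq_sqrt (Finset.sum_nonneg fun _ _ => Finset.sum_nonneg fun _ _ => sq_nonneg _)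

lemma frob_sq_columns {p N : ℕ} (A : Matrix (Fin p) (Fin N) ℝ) :
    frob A ^ 2 = ∑ i, ∑ x, (A x i) ^ 2 := by
  rw [frob_sq, Finset.sum_comm]

/-- The Frobenius pairing `⟨Y, YAᵀA⟩` equals `‖YAᵀ‖²`, hence is nonnegative. -/
lemma pairing_nonneg {q p N : ℕ} (Y : Matrix (Fin q) (Fin N) ℝ) (A : Matrix (Fin p) (Fin N) ℝ) :
    0 ≤ ∑ x, ∑ i, Y x i * (Y * (Aᵀ * A)) x i := by
  have h1 : ∑ x, ∑ i, Y x i * (Y * (Aᵀ * A)) x i = ((Y * (Aᵀ * A)) * Yᵀ).trace := by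
    simp only [Matrix.trace, Matrix.diag_apply, Matrix.mul_apply (N := Yᵀ), Matrix.transpose_apply]
    exact Finset.sum_congr rfl fun x _ => Finset.sum_congr rfl fun i _ => mul_comm _ _
  have h2 : (Y * (Aᵀ * A)) * Yᵀ = (Y * Aᵀ) * (Y * Aᵀ)ᵀ := by
    simp [Matrix.transpose_mul, Matrix.mul_assoc]
  rw [h1, h2]
  simp only [Matrix.trace, Matrix.diag_apply, Matrix.mul_apply (M := Y * Aᵀ),
    Matrix.transpose_apply]
  exact Finset.sum_nonneg fun x _ => Finset.sum_nonneg fun i _ => mul_self_nonneg _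

lemma isUnit_det_Mmat {p N : ℕ} (H V : Matrix (Fin p) (Fin N) ℝ) : IsUnit (Mmat H V).det := by
  have h : (Mmat H V).PosDef := by
    have h2 := Matrix.posSemidef_conjTranspose_mul_self (H + V)
    rw [Matrix.conjTranspose_eq_transpose_of_trivial] at h2
    exact Matrix.PosDef.one.add_posSemidef h2
  exact h.det_pos.ne'.isUnit

/-- Right multiplication by `M(V)⁻¹` is a contraction in the Frobenius norm. -/
lemma frob_mul_inv_le {q p N : ℕ} (H V : Matrix (Fin p) (Fin N) ℝ)
    (X : Matrix (Fin q) (Fin N) ℝ) : frob (X * (Mmat H V)⁻¹) ≤ frob X := by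
  set Y := X * (Mmat H V)⁻¹ with hY
  have hX : X = Y + Y * ((H + V)ᵀ * (H + V)) := by
    have : Y * Mmat H V = X := by
      rw [hY, Matrix.mul_assoc, Matrix.nonsing_inv_mul _ (isUnit_det_Mmat H V), Matrix.mul_one]
    rw [← this, Mmat, Matrix.mul_add, Matrix.mul_one]
  have hp := pairing_nonneg Y (H + V)
  rw [← sq_le_sq₀ (frob_nonneg _) (frob_nonneg _), frob_sq, frob_sq, hX]
  set Z := Y * ((H + V)ᵀ * (H + V))
  calc ∑ x, ∑ i, Y x i ^ 2
      ≤ ∑ x, ∑ i, Y x i ^ 2 + 2 * ∑ x, ∑ i, Y x i * Z x i := by linarith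
    _ = ∑ x, ∑ i, (Y x i ^ 2 + 2 * (Y x i * Z x i)) := by
      simp only [Finset.sum_add_distrib, Finset.mul_sum]
    _ ≤ ∑ x, ∑ i, (Y + Z) x i ^ 2 := by
      refine Finset.sum_le_sum fun x _ => Finset.sum_le_sum fun i _ => ?_
      rw [Matrix.add_apply]
      nlinarith [sq_nonneg (Z x i)]

lemma frob_egrad_le {p N : ℕ} (H V : Matrix (Fin p) (Fin N) ℝ) :
    frob (egrad H V) ≤ 2 * frob (H + V) := by
  have h := frob_mul_inv_le H V (H + V)
  rw [frob_eq_norm] at h ⊢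
  rw [egrad, norm_smul]
  norm_num
  exact h

lemma frob_hess_le {p N : ℕ} (H V U : Matrix (Fin p) (Fin N) ℝ) :
    frob (hess H V U) ≤ (2 + 4 * frob (H + V) ^ 2) * frob U := by
  have h1 := frob_mul_inv_le H V U
  have h2 := frob_mul_inv_le H V (H + V)
  have h3 := frob_mul_inv_le H V
    ((H + V) * (Mmat H V)⁻¹ * (Uᵀ * (H + V) + (H + V)ᵀ * U))
  simp only [frob_eq_norm] at *
  have h4 : ‖Uᵀ * (H + V) + (H + V)ᵀ * U‖ ≤ 2 * (‖H + V‖ * ‖U‖) := by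
    have a := Matrix.frobenius_norm_mul Uᵀ (H + V)
    have b := Matrix.frobenius_norm_mul (H + V)ᵀ U
    rw [Matrix.frobenius_norm_transpose] at a b
    have c := norm_add_le (Uᵀ * (H + V)) ((H + V)ᵀ * U)
    linarith
  have h5 : ‖(H + V) * (Mmat H V)⁻¹ * (Uᵀ * (H + V) + (H + V)ᵀ * U)‖
      ≤ ‖H + V‖ * (2 * (‖H + V‖ * ‖U‖)) :=
    (Matrix.frobenius_norm_mul _ _).trans
      (mul_le_mul h2 h4 (norm_nonneg _) (norm_nonneg _))
  rw [hess]
  refine (norm_add_le _ _).trans ?_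
  rw [norm_smul, norm_smul, norm_neg, Real.norm_ofNat]
  linarith

/-- If the columns of `V` have squared lengths `α_i`, the projection of each column onto the
orthogonal complement of the corresponding column of `V` is a Frobenius contraction. -/
lemma frob_proj_le {p N : ℕ} (α : Fin N → ℝ) (V W : Matrix (Fin p) (Fin N) ℝ)
    (hα : ∀ i, 0 < α i) (hV : ∀ i, ∑ x, (V x i) ^ 2 = α i) :
    frob (Matrix.of fun x i => W x i - (α i)⁻¹ * (∑ y, V y i * W y i) * V x i) ≤ frob W := by
  rw [← sq_le_sq₀ (frob_nonneg _) (frob_nonneg _), frob_sq_columns, frob_sq_columns]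
  refine Finset.sum_le_sum fun i _ => ?_
  simp only [Matrix.of_apply]
  set s := ∑ y, V y i * W y i with hs
  have e (c : ℝ) : ∑ x, (W x i - c * V x i) ^ 2
      = ∑ x, W x i ^ 2 - 2 * c * s + c ^ 2 * α i := by
    rw [← hV i, hs, Finset.mul_sum, Finset.mul_sum, ← Finset.sum_sub_distrib,
      ← Finset.sum_add_distrib]
    exact Finset.sum_congr rfl fun x _ => by ring
  have e2 : ((α i)⁻¹ * s) ^ 2 * α i = (α i)⁻¹ * s ^ 2 := by
    have := (hα i).ne'
    field_simp
  have : 0 ≤ (α i)⁻¹ * s ^ 2 := mul_nonneg (inv_nonneg.2 (hα i).le) (sq_nonneg _)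
  rw [e, e2]
  linarith

/-- Scaling the columns by factors of absolute value at most `c` scales the norm by at
most `c`. -/
lemma frob_scale_le {p N : ℕ} (d : Fin N → ℝ) (c : ℝ) (hc : 0 ≤ c) (hd : ∀ i, |d i| ≤ c)
    (U : Matrix (Fin p) (Fin N) ℝ) :
    frob (Matrix.of fun x i => d i * U x i) ≤ c * frob U := by
  rw [← sq_le_sq₀ (frob_nonneg _) (mul_nonneg hc (frob_nonneg _)), mul_pow, frob_sq, frob_sq,
    Finset.mul_sum]
  refine Finset.sum_le_sum fun x _ => ?_
  rw [Finset.mul_sum]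
  refine Finset.sum_le_sum fun i _ => ?_
  rw [Matrix.of_apply, mul_pow]
  exact mul_le_mul_of_nonneg_right (sq_le_sq' (abs_le.1 (hd i)).1 (abs_le.1 (hd i)).2)
    (sq_nonneg _)

/-- The diagonal multipliers `g_iᵀv_i / α_i` are bounded by `‖G‖_F / √α_min`. -/
lemma abs_multiplier_le {p N : ℕ} [NeZero N] (α : Fin N → ℝ) (G V : Matrix (Fin p) (Fin N) ℝ)
    (hα : ∀ i, 0 < α i) (hV : ∀ i, ∑ x, (V x i) ^ 2 = α i) (i : Fin N) :
    |(α i)⁻¹ * ∑ y, G y i * V y i| ≤ frob G / Real.sqrt (⨅ i, α i) := by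
  have hmin : 0 < ⨅ i, α i := by
    obtain ⟨j, hj⟩ := exists_eq_ciInf_of_finite (f := α)
    rw [← hj]
    exact hα j
  have hle : ⨅ i, α i ≤ α i := ciInf_le (Set.finite_range α).bddBelow i
  have hcs : (∑ y, G y i * V y i) ^ 2 ≤ frob G ^ 2 * α i := by
    refine (Finset.sum_mul_sq_le_sq_mul_sq _ _ _).trans ?_
    rw [hV i, frob_sq_columns]
    exact mul_le_mul_of_nonneg_right
      (Finset.single_le_sum (f := fun i => ∑ x, G x i ^ 2)
        (fun _ _ => Finset.sum_nonneg fun _ _ => sq_nonneg _) (Finset.mem_univ i)) (hα i).le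
  refine abs_le_of_sq_le_sq ?_ (div_nonneg (frob_nonneg _) (Real.sqrt_nonneg _))
  rw [div_pow, Real.sq_sqrt hmin.le, mul_pow]
  calc (α i)⁻¹ ^ 2 * (∑ y, G y i * V y i) ^ 2 ≤ (α i)⁻¹ ^ 2 * (frob G ^ 2 * α i) :=
        mul_le_mul_of_nonneg_left hcs (sq_nonneg _)
    _ = frob G ^ 2 / α i := by
        have := (hα i).ne'
        field_simp
    _ ≤ frob G ^ 2 / ⨅ i, α i := div_le_div_of_nonneg_left (sq_nonneg _) hmin hle

lemma frob_add_le_radius {p N : ℕ} (H V : Matrix (Fin p) (Fin N) ℝ) (α : Fin N → ℝ)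
    (hV : ∀ i, ∑ x, (V x i) ^ 2 = α i) :
    frob (H + V) ≤ frob H + Real.sqrt (∑ i, α i) := by
  have h : frob V = Real.sqrt (∑ i, α i) := by
    rw [frob, Finset.sum_comm]
    simp only [hV]
  rw [← h, frob_eq_norm, frob_eq_norm, frob_eq_norm]
  exact norm_add_le _ _

/-- If the columns of `V` lie on the spheres `‖v_i‖₂² = α_i` and the columns of `U` are
tangent (`u_iᵀv_i = 0`), then `‖Proj(∇²ℓ(V)[U]) + U·Λ‖_F ≤ L·‖U‖_F` with
`L = 2 + 4(‖H‖_F + √ᾱ)² + (2/√α_min)(‖H‖_F + √ᾱ)`. -/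
theorem rhess_frobenius_bound
    {p N : ℕ} [NeZero N] (H V : Matrix (Fin p) (Fin N) ℝ) (α : Fin N → ℝ)
    (hα : ∀ i, 0 < α i) (hV : ∀ i, ∑ x, (V x i) ^ 2 = α i)
    (U : Matrix (Fin p) (Fin N) ℝ) (hU : ∀ i, ∑ x, U x i * V x i = 0) :
    frob (rhess α H V U)
      ≤ (2 + 4 * (frob H + Real.sqrt (∑ i, α i)) ^ 2
          + 2 / Real.sqrt (⨅ i, α i) * (frob H + Real.sqrt (∑ i, α i))) * frob U := by
  set R := frob H + Real.sqrt (∑ i, α i)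
  have hA : frob (H + V) ≤ R := frob_add_le_radius H V α hV
  have hA0 := frob_nonneg (H + V)
  have hG : frob (egrad H V) ≤ 2 * R := (frob_egrad_le H V).trans (by linarith)
  have hs := Real.sqrt_nonneg (⨅ i, α i)
  have hR : 0 ≤ R := hA0.trans hA
  have hscale := frob_scale_le (fun i => (α i)⁻¹ * ∑ y, egrad H V y i * V y i)
    (2 * R / Real.sqrt (⨅ i, α i)) (by positivity)
    (fun i => (abs_multiplier_le α (egrad H V) V hα hV i).trans
      (div_le_div_of_nonneg_right hG hs)) U
  have hproj := (frob_proj_le α V (hess H V U) hα hV).trans (frob_hess_le H V U)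
  have hsq : (2 + 4 * frob (H + V) ^ 2) * frob U ≤ (2 + 4 * R ^ 2) * frob U :=
    mul_le_mul_of_nonneg_right (by nlinarith) (frob_nonneg U)
  have htri : frob (rhess α H V U)
      ≤ frob (Matrix.of fun x i => hess H V U x i
          - (α i)⁻¹ * (∑ y, V y i * hess H V U y i) * V x i)
        + frob (Matrix.of fun x i => (α i)⁻¹ * (∑ y, egrad H V y i * V y i) * U x i) := by
    simp only [frob_eq_norm]
    exact norm_sub_le _ _
  calc frob (rhess α H V U)
      ≤ (2 + 4 * R ^ 2) * frob U + 2 * R / Real.sqrt (⨅ i, α i) * frob U :=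
        htri.trans (add_le_add (hproj.trans hsq) hscale)
    _ = _ := by ring
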